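/- Assume G is an elementary abelian 2-group with n = |G| > 8. Define: B₁ = {E_a*A_bE_c* : a,c ∈ {1,2,3,4}, b ∈ {0,1,2,3}, b ≠ max{a,c}, and p_{cb}^a ≠ 0}, where p_{gh}^i denotes the intersection number of the scheme (for any (u,v) ∈ R_i, p_{gh}^i = |{w ∈ X_G : (u,w) ∈ R_g and (w,v) ∈ R_h}|, independent of the choice of (u,v) ∈ R_i); B₂ = {E_a*JE_b* : a,b ∈ {0,…,4}}; B₅ = {E_1*A_2E_3*A_1E_4*, E_2*A_1E_3*A_2E_4*, E_3*A_1E_2*A_3E_4*, E_4*A_1E_3*A_2E_1*, E_4*A_2E_3*A_1E_2*, E_4*A_3E_2*A_1E_3*}; B₆ = {E_4*A_aE_b*A_cE_4* : {a,b,c} = {1,2,3}}. Then B₁ ∪ B₂ ∪ B₅ ∪ B₆ is an F-basis of the Terwilliger F-algebra T, i.e. it is F-linearly independent and its F-linear span equals T. -/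

import Mathlib

open Matrix

abbrev XG (G : Type) [Group G] : Type := {v : Fin 3 → G // v 0 * v 1 = v 2}

def cIdx : Fin 5 → Fin 3
  | 0 => 0
  | 1 => 0
  | 2 => 1
  | 3 => 2
  | 4 => 0

def rel {G : Type} [Group G] (i : Fin 5) (y z : XG G) : Prop :=
  if i = 0 then y = z
  else if i = 4 then ∀ d : Fin 3, y.1 d ≠ z.1 d
  else y ≠ z ∧ y.1 (cIdx i) = z.1 (cIdx i)

instance {G : Type} [Group G] [DecidableEq G] (i : Fin 5) (y z : XG G) :
    Decidable (rel i y z) := by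
  unfold rel
  infer_instance

def Adj (F : Type) [Field F] {G : Type} [Group G] [DecidableEq G] (i : Fin 5) :
    Matrix (XG G) (XG G) F :=
  Matrix.of fun y z => if rel i y z then 1 else 0

def DualE (F : Type) [Field F] {G : Type} [Group G] [DecidableEq G] (x : XG G) (i : Fin 5) :
    Matrix (XG G) (XG G) F :=
  Matrix.of fun y z => if y = z ∧ rel i x y then 1 else 0

def AllOne (F : Type) [Field F] (G : Type) [Group G] : Matrix (XG G) (XG G) F :=
  Matrix.of fun _ _ => 1

def genSet (F : Type) [Field F] (G : Type) [Group G] [Fintype G] [DecidableEq G]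
    (x : XG G) : Set (Matrix (XG G) (XG G) F) :=
  {M | ∃ a b c : Fin 5, M = DualE F x a * Adj F b * DualE F x c}

def TerwilligerAlg (F : Type) [Field F] (G : Type) [Group G] [Fintype G] [DecidableEq G]
    (x : XG G) : Subalgebra F (Matrix (XG G) (XG G) F) :=
  Algebra.adjoin F (genSet F G x)

def B1set (F : Type) [Field F] (G : Type) [Group G] [Fintype G] [DecidableEq G]
    (x : XG G) : Set (Matrix (XG G) (XG G) F) :=
  {M | ∃ a c b : Fin 5,
    a ∈ ({1, 2, 3, 4} : Finset (Fin 5)) ∧ c ∈ ({1, 2, 3, 4} : Finset (Fin 5)) ∧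
    b ∈ ({0, 1, 2, 3} : Finset (Fin 5)) ∧ b ≠ max a c ∧
    (∃ u v : XG G, rel a u v ∧ ∃ w : XG G, rel c u w ∧ rel b w v) ∧
    M = DualE F x a * Adj F b * DualE F x c}

def B2set (F : Type) [Field F] (G : Type) [Group G] [Fintype G] [DecidableEq G]
    (x : XG G) : Set (Matrix (XG G) (XG G) F) :=
  {M | ∃ a b : Fin 5, M = DualE F x a * AllOne F G * DualE F x b}

def B5set (F : Type) [Field F] (G : Type) [Group G] [Fintype G] [DecidableEq G]
    (x : XG G) : Set (Matrix (XG G) (XG G) F) :=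
  {DualE F x 1 * Adj F 2 * DualE F x 3 * Adj F 1 * DualE F x 4,
   DualE F x 2 * Adj F 1 * DualE F x 3 * Adj F 2 * DualE F x 4,
   DualE F x 3 * Adj F 1 * DualE F x 2 * Adj F 3 * DualE F x 4,
   DualE F x 4 * Adj F 1 * DualE F x 3 * Adj F 2 * DualE F x 1,
   DualE F x 4 * Adj F 2 * DualE F x 3 * Adj F 1 * DualE F x 2,
   DualE F x 4 * Adj F 3 * DualE F x 2 * Adj F 1 * DualE F x 3}

def B6set (F : Type) [Field F] (G : Type) [Group G] [Fintype G] [DecidableEq G]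
    (x : XG G) : Set (Matrix (XG G) (XG G) F) :=
  {M | ∃ a b c : Fin 5, ({a, b, c} : Finset (Fin 5)) = {1, 2, 3} ∧
    M = DualE F x 4 * Adj F a * DualE F x b * Adj F c * DualE F x 4}

/-!
Move the base point `x` to the origin. A point then has coordinates `s, t, st`: on the cell `R_d(x)`
the coordinate `d` is `1` and the two others agree, and on `R_4(x)` no coordinate is `1`. For a
coordinate `i` of a cell, let `N` be the incidence matrix between its points and the values in
`G ∖ {1}` of that coordinate. Any two incidence matrices have a Gram matrix `Nᵀ N'` in the span of
the identity and the all-one matrix, because distinct coordinates of a point of `R_4(x)` are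
arbitrary subject to being distinct and different from `1`. Hence the matchings `N N'ᵀ`, the all-one
blocks and the identity span an algebra. It contains the generators, since the points of two cells
that are in relation `R_i` are those that agree at coordinate `i`, apart from the diagonal.

Conversely `E_a* A_b E_c*` is essentially a matching, except if it is an all-one block, and the
matchings that do not arise in this way are products of two that meet at a cell `R_d(x)`: these are
`B₅` and `B₆`.

For independence, a linear relation is evaluated at pairs of points that are paired by no matching,
or by exactly one. Such points exist because the coordinates of a point, together with `1`, form a
set `S` of at most four elements: if `A` is given, some `B` lies outside the at most eight elements
of `S ∪ A S`, and the point with coordinates `A, B, A B` has only its first coordinate prescribed.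
-/

section LatinSquare

variable {G : Type} [Group G]

theorem exists_ne_and_ne (i j : Fin 3) : ∃ k, i ≠ k ∧ j ≠ k := by
  decide +revert

/-- The index of the relation `R_Δ` for the coordinate `Δ = d`. Coordinates are numbered from `0`
and relations from `1`, hence the shift. -/
def lineRel (d : Fin 3) : Fin 5 := d.castSucc.succ

theorem lineRel_ne_four (d : Fin 3) : lineRel d ≠ 4 := by
  decide +revert

theorem eq_zero_or_lineRel_or_four (a : Fin 5) : a = 0 ∨ (∃ d, a = lineRel d) ∨ a = 4 := by
  decide +revert

/-- The coordinates in which two points in relation `R_a` differ. -/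
def moved (a : Fin 5) : Finset (Fin 3) :=
  if a = 0 then ∅ else if a = 4 then Finset.univ else {cIdx a}ᶜ

theorem moved_injective : Function.Injective moved := by
  decide

theorem mem_moved_four (i : Fin 3) : i ∈ moved 4 := by
  decide +revert

theorem mem_moved_lineRel {i d : Fin 3} : i ∈ moved (lineRel d) ↔ i ≠ d := by
  decide +revert

theorem eq_of_coord_eq {y z : XG G} {i j : Fin 3} (hij : i ≠ j) (hi : y.1 i = z.1 i)
    (hj : y.1 j = z.1 j) : y = z := by
  have h0 (h1 : y.1 1 = z.1 1) (h2 : y.1 2 = z.1 2) : y.1 0 = z.1 0 :=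
    mul_right_cancel (b := y.1 1) (by rw [y.2, h2, h1, z.2])
  have h1 (h0 : y.1 0 = z.1 0) (h2 : y.1 2 = z.1 2) : y.1 1 = z.1 1 :=
    mul_left_cancel (a := y.1 0) (by rw [y.2, h2, h0, z.2])
  have h2 (h0 : y.1 0 = z.1 0) (h1 : y.1 1 = z.1 1) : y.1 2 = z.1 2 := by
    rw [← y.2, h0, h1, z.2]
  ext d
  fin_cases i <;> fin_cases j <;> fin_cases d <;> simp_all

theorem rel_zero (y z : XG G) : rel 0 y z ↔ y = z := by
  simp [rel]

theorem rel_lineRel (d : Fin 3) (y z : XG G) :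
    rel (lineRel d) y z ↔ y ≠ z ∧ y.1 d = z.1 d := by
  fin_cases d <;> simp [rel, lineRel, cIdx]

theorem exists_rel (y z : XG G) : ∃ a, rel a y z := by
  by_cases h4 : ∀ d, y.1 d ≠ z.1 d
  · exact ⟨4, by simpa [rel] using h4⟩
  push Not at h4
  obtain ⟨d, hd⟩ := h4
  by_cases h0 : y = z
  · exact ⟨0, (rel_zero y z).2 h0⟩
  · exact ⟨lineRel d, (rel_lineRel d y z).2 ⟨h0, hd⟩⟩

theorem rel_iff_moved (a : Fin 5) (y z : XG G) :
    rel a y z ↔ ∀ d, y.1 d ≠ z.1 d ↔ d ∈ moved a := by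
  obtain rfl | ⟨i, rfl⟩ | rfl := eq_zero_or_lineRel_or_four a
  · simp [rel_zero, moved, Subtype.ext_iff, funext_iff]
  · simp only [rel_lineRel, mem_moved_lineRel]
    refine ⟨fun ⟨hne, hi⟩ d => ⟨fun hd h => hd (h ▸ hi), fun hd h => hne (eq_of_coord_eq hd h hi)⟩,
      fun h => ⟨?_, not_not.1 fun hne => (h i).1 hne rfl⟩⟩
    rintro rfl
    obtain ⟨d, hd⟩ := exists_ne i
    exact (h d).2 hd rfl
  · simp [rel, moved]

theorem rel_symm {a : Fin 5} {y z : XG G} (h : rel a y z) : rel a z y := by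
  simpa only [rel_iff_moved, ne_comm] using h

theorem rel_unique {a b : Fin 5} {y z : XG G} (ha : rel a y z) (hb : rel b y z) : a = b := by
  rw [rel_iff_moved] at ha hb
  exact moved_injective (Finset.ext fun d => (ha d).symm.trans (hb d))

theorem moved_subset_union {a b c : Fin 5} {u v w : XG G} (ha : rel a u v) (hb : rel b v w)
    (hc : rel c u w) : moved c ⊆ moved a ∪ moved b := by
  intro d
  rw [Finset.mem_union, ← (rel_iff_moved _ _ _).1 ha, ← (rel_iff_moved _ _ _).1 hb,
    ← (rel_iff_moved _ _ _).1 hc]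
  by_contra! h
  exact h.1 (h.2.1.trans h.2.2)

/-- The coordinates of `y` in the frame with origin `x`. -/
def disp (x y : XG G) (d : Fin 3) : G := y.1 d / x.1 d

theorem rel_iff_disp {a : Fin 5} {x y : XG G} :
    rel a x y ↔ ∀ d, disp x y d ≠ 1 ↔ d ∈ moved a := by
  simp only [rel_iff_moved, disp, ne_eq, div_eq_one, eq_comm (a := x.1 _)]

theorem disp_eq_one_of_rel {a : Fin 5} {x y : XG G} (h : rel a x y) {i : Fin 3}
    (hi : i ∉ moved a) : disp x y i = 1 :=
  not_not.1 (mt (rel_iff_disp.1 h i).1 hi)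

theorem disp_injective (x : XG G) {i j : Fin 3} (hij : i ≠ j) :
    Function.Injective fun y => (disp x y i, disp x y j) := fun _ _ h =>
  eq_of_coord_eq hij (div_left_inj.1 (Prod.ext_iff.1 h).1) (div_left_inj.1 (Prod.ext_iff.1 h).2)

theorem natCard_xg : Nat.card (XG G) = Nat.card (G × G) :=
  Nat.card_congr
    { toFun y := (y.1 0, y.1 1)
      invFun g := ⟨![g.1, g.2, g.1 * g.2], by simp⟩
      left_inv y := eq_of_coord_eq zero_ne_one rfl rfl
      right_inv g := by simp }

theorem exists_disp_eq [Finite G] (x : XG G) {i j : Fin 3} (hij : i ≠ j) (s t : G) :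
    ∃ y, disp x y i = s ∧ disp x y j = t := by
  obtain ⟨y, hy⟩ := ((disp_injective x hij).bijective_of_nat_card_le natCard_xg.ge).2 (s, t)
  exact ⟨y, Prod.ext_iff.1 hy⟩

variable (hG : ∀ a : G, a ^ 2 = 1)
include hG

theorem mul_self_eq_one (a : G) : a * a = 1 := sq a ▸ hG a

theorem mul_eq_one_iff_eq_of_sq_eq_one (a b : G) : a * b = 1 ↔ a = b := by
  rw [← mul_self_eq_one hG b, mul_left_inj]

theorem mul_comm_of_sq_eq_one (a b : G) : a * b = b * a :=
  Commute.of_orderOf_dvd_two (fun g => orderOf_dvd_of_pow_eq_one (hG g)) a b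

theorem disp_mul_disp (x y : XG G) {i j k : Fin 3} (hij : i ≠ j) (hik : i ≠ k) (hjk : j ≠ k) :
    disp x y i * disp x y j = disp x y k := by
  have h012 : disp x y 0 * disp x y 1 = disp x y 2 := by
    simp only [disp, ← x.2, ← y.2]
    exact Commute.div_mul_div_comm (mul_comm_of_sq_eq_one hG _ _) (mul_comm_of_sq_eq_one hG _ _)
  have swap {a b c : G} (h : a * b = c) : b * a = c := (mul_comm_of_sq_eq_one hG b a).trans h
  have solve {a b c : G} (h : a * b = c) : a * c = b := by
    rw [← h, ← mul_assoc, mul_self_eq_one hG, one_mul]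
  fin_cases i <;> fin_cases j <;> fin_cases k <;>
    first
    | contradiction
    | exact h012
    | exact swap h012
    | exact solve h012
    | exact swap (solve h012)
    | exact solve (swap h012)
    | exact swap (solve (swap h012))

theorem rel_iff_disp_of_ne {a : Fin 5} {x y : XG G} {i j k : Fin 3} (hij : i ≠ j) (hik : i ≠ k)
    (hjk : j ≠ k) :
    rel a x y ↔ (disp x y i ≠ 1 ↔ i ∈ moved a) ∧ (disp x y j ≠ 1 ↔ j ∈ moved a) ∧
      (disp x y i ≠ disp x y j ↔ k ∈ moved a) := by
  rw [rel_iff_disp, ne_eq (disp x y i) (disp x y j), ← mul_eq_one_iff_eq_of_sq_eq_one hG,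
    disp_mul_disp hG x y hij hik hjk]
  refine ⟨fun h => ⟨h i, h j, h k⟩, fun ⟨hi, hj, hk⟩ d => ?_⟩
  obtain rfl | rfl | rfl : d = i ∨ d = j ∨ d = k := by lia
  exacts [hi, hj, hk]

theorem disp_eq_disp_of_rel_lineRel {x y : XG G} {d i j : Fin 3} (h : rel (lineRel d) x y)
    (hi : i ≠ d) (hj : j ≠ d) : disp x y i = disp x y j := by
  rcases eq_or_ne i j with rfl | hij
  · rfl
  rw [← mul_eq_one_iff_eq_of_sq_eq_one hG, disp_mul_disp hG x y hij hi hj]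
  exact disp_eq_one_of_rel h (fun h => mem_moved_lineRel.1 h rfl)

end LatinSquare

section Incidence

variable (F : Type) [Field F] {G : Type} [Group G] [DecidableEq G] (x : XG G)

/-- The indicator vector of the cell `R_a(x)`. -/
def cellVec (a : Fin 5) : XG G → F :=
  fun y => if rel a x y then 1 else 0

/-- The incidence matrix between the points of the cell `R_a(x)` and the values of their `i`-th
coordinate in the frame with origin `x`. -/
def incidence (a : Fin 5) (i : Fin 3) : Matrix (XG G) G F :=
  of fun y g => if rel a x y ∧ disp x y i = g then 1 else 0

/-- The indicator vector of `G ∖ {1}`. -/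
def offOne (F : Type) [Field F] (G : Type) [Group G] [DecidableEq G] : G → F :=
  fun g => if g = 1 then 0 else 1

variable {F x}

theorem incidence_apply_mul_offOne {a : Fin 5} {i : Fin 3} (hi : i ∈ moved a) (y : XG G) (g : G) :
    incidence F x a i y g * offOne F G g = incidence F x a i y g := by
  simp only [incidence, offOne, of_apply]
  split_ifs with h hg
  · exact absurd (h.2.trans hg) ((rel_iff_disp.1 h.1 i).2 hi)
  all_goals simp

theorem incidence_lineRel_eq (hG : ∀ a : G, a ^ 2 = 1) {d i j : Fin 3} (hi : i ≠ d) (hj : j ≠ d) :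
    incidence F x (lineRel d) i = incidence F x (lineRel d) j := by
  ext y g
  simp only [incidence, of_apply]
  refine if_congr (and_congr_right fun h => ?_) rfl rfl
  rw [disp_eq_disp_of_rel_lineRel hG h hi hj]

variable [Fintype G]

theorem incidence_mul_transpose_apply (a c : Fin 5) (i j : Fin 3) (y z : XG G) :
    (incidence F x a i * (incidence F x c j)ᵀ) y z =
      if rel a x y ∧ rel c x z ∧ disp x y i = disp x z j then 1 else 0 := by
  by_cases hy : rel a x y <;> by_cases hz : rel c x z <;>
    simp [mul_apply, incidence, hy, hz, eq_comm]

theorem incidence_mulVec_one (a : Fin 5) (i : Fin 3) :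
    incidence F x a i *ᵥ 1 = cellVec F x a := by
  ext y
  simp [mulVec, dotProduct, incidence, cellVec, ite_and]

theorem incidence_mulVec_offOne {a : Fin 5} {i : Fin 3} (hi : i ∈ moved a) :
    incidence F x a i *ᵥ offOne F G = cellVec F x a := by
  rw [← incidence_mulVec_one a i]
  ext y
  simp [mulVec, dotProduct, incidence_apply_mul_offOne hi]

theorem incidence_mul_diagonal_offOne {a : Fin 5} {i : Fin 3} (hi : i ∈ moved a) :
    incidence F x a i * diagonal (offOne F G) = incidence F x a i := by
  ext y g
  rw [mul_diagonal, incidence_apply_mul_offOne hi]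

theorem incidence_transpose_mul_incidence_of_ne {a c : Fin 5} (hac : a ≠ c) (i j : Fin 3) :
    (incidence F x a i)ᵀ * incidence F x c j = 0 := by
  ext s t
  refine Finset.sum_eq_zero fun z _ => ?_
  by_cases ha : rel a x z
  · simp [incidence, show ¬ rel c x z from fun hc => hac (rel_unique ha hc)]
  · simp [incidence, ha]

theorem incidence_transpose_mul_self (a : Fin 5) (i : Fin 3) :
    (incidence F x a i)ᵀ * incidence F x a i = diagonal (cellVec F x a ᵥ* incidence F x a i) := by
  ext s t
  rcases eq_or_ne s t with rfl | hst
  · rw [diagonal_apply_eq]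
    exact Finset.sum_congr rfl fun z _ => by
      by_cases h : rel a x z <;> simp [incidence, cellVec, h]
  · rw [diagonal_apply_ne _ hst]
    refine Finset.sum_eq_zero fun z _ => ?_
    by_cases hs : disp x z i = s
    · simp [incidence, show disp x z i ≠ t from fun ht => hst (hs.symm.trans ht)]
    · simp [incidence, hs]

variable (hG : ∀ a : G, a ^ 2 = 1)
include hG

theorem incidence_transpose_mul_apply (a : Fin 5) {i j k : Fin 3}
    (hij : i ≠ j) (hik : i ≠ k) (hjk : j ≠ k) (s t : G) :
    ((incidence F x a i)ᵀ * incidence F x a j) s t =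
      if (s ≠ 1 ↔ i ∈ moved a) ∧ (t ≠ 1 ↔ j ∈ moved a) ∧ (s ≠ t ↔ k ∈ moved a) then 1 else 0 := by
  obtain ⟨z, rfl, rfl⟩ := exists_disp_eq x hij s t
  simp only [← rel_iff_disp_of_ne hG hij hik hjk]
  rw [mul_apply, Finset.sum_eq_single z]
  · simp [incidence]
  · intro y _ hy
    have : ¬ (disp x y i = disp x z i ∧ disp x y j = disp x z j) := fun h =>
      hy (disp_injective x hij (Prod.ext h.1 h.2))
    simp only [incidence, transpose_apply, of_apply]
    split_ifs <;> simp_all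
  · simp

theorem gram_lineRel {d i j : Fin 3} (hi : i ≠ d) (hj : j ≠ d) :
    (incidence F x (lineRel d) i)ᵀ * incidence F x (lineRel d) j = diagonal (offOne F G) := by
  obtain ⟨k, hik, hkd⟩ : ∃ k, i ≠ k ∧ k ≠ d := by
    clear * - hi
    decide +revert
  rw [incidence_lineRel_eq hG hj hkd]
  ext s t
  rw [incidence_transpose_mul_apply hG _ hik hi hkd, diagonal_apply, offOne]
  simp only [mem_moved_lineRel]
  grind

theorem gram_four_of_ne {i j : Fin 3} (hij : i ≠ j) :
    (incidence F x 4 i)ᵀ * incidence F x 4 j =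
      vecMulVec (offOne F G) (offOne F G) - diagonal (offOne F G) := by
  obtain ⟨k, hik, hjk⟩ := exists_ne_and_ne i j
  ext s t
  rw [incidence_transpose_mul_apply hG 4 hij hik hjk, Matrix.sub_apply, vecMulVec_apply,
    diagonal_apply]
  simp only [mem_moved_four, iff_true, offOne]
  grind

theorem cellVec_vecMul_incidence {a : Fin 5} {i : Fin 3} (hi : i ∈ moved a) :
    ∃ κ : F, cellVec F x a ᵥ* incidence F x a i = κ • offOne F G := by
  obtain rfl | ⟨d, rfl⟩ | rfl := eq_zero_or_lineRel_or_four a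
  · exact absurd hi (Finset.notMem_empty i)
  · rw [mem_moved_lineRel] at hi
    refine ⟨1, ?_⟩
    rw [← incidence_mulVec_one _ i, ← vecMul_transpose, vecMul_vecMul, gram_lineRel hG hi hi]
    ext
    simp [vecMul_diagonal]
  · obtain ⟨j, hji⟩ := exists_ne i
    refine ⟨1 ⬝ᵥ offOne F G - 1, ?_⟩
    rw [← incidence_mulVec_one _ j, ← vecMul_transpose, vecMul_vecMul, gram_four_of_ne hG hji,
      vecMul_sub, vecMul_vecMulVec, sub_smul, one_smul]
    congr 1
    ext
    simp [vecMul_diagonal]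

theorem exists_gram_eq {a : Fin 5} {i j : Fin 3} (hi : i ∈ moved a) (hj : j ∈ moved a) :
    ∃ α β : F, (incidence F x a i)ᵀ * incidence F x a j =
      α • diagonal (offOne F G) + β • vecMulVec (offOne F G) (offOne F G) := by
  obtain rfl | ⟨d, rfl⟩ | rfl := eq_zero_or_lineRel_or_four a
  · exact absurd hi (Finset.notMem_empty i)
  · rw [mem_moved_lineRel] at hi hj
    exact ⟨1, 0, by rw [gram_lineRel hG hi hj]; simp⟩
  · obtain rfl | hij := eq_or_ne i j
    · obtain ⟨κ, hκ⟩ := cellVec_vecMul_incidence (F := F) (x := x) hG hi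
      exact ⟨κ, 0, by rw [incidence_transpose_mul_self, hκ, diagonal_smul]; simp⟩
    · exact ⟨-1, 1, by rw [gram_four_of_ne hG hij]; module⟩

end Incidence

section Labels

/-- The labels of the nontrivial matchings between cells. On the cell `R_d(x)` the coordinate `d` is
constant and the two others agree in the frame with origin `x`, which gives the single label
`line d`; on the cell `R_4(x)` every coordinate `d` gives a label `point d`. -/
inductive Label
  | line (d : Fin 3)
  | point (d : Fin 3)
  deriving DecidableEq, Fintype

namespace Label

/-- The index of the cell to which a label belongs. -/
def cell : Label → Fin 5
  | line d => lineRel d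
  | point _ => 4

/-- The coordinates whose value is the one recorded by a label. -/
def coords : Label → Finset (Fin 3)
  | line d => {d}ᶜ
  | point d => {d}

/-- A chosen element of `coords`. -/
def coord : Label → Fin 3
  | line d => d + 1
  | point d => d

theorem coord_mem_coords (p : Label) : p.coord ∈ p.coords := by
  decide +revert

theorem coord_mem_moved (p : Label) : p.coord ∈ moved p.cell := by
  decide +revert

theorem exists_mem_coords {a : Fin 5} {i : Fin 3} (hi : i ∈ moved a) :
    ∃ p : Label, p.cell = a ∧ i ∈ p.coords := by
  decide +revert

theorem cell_ne_zero (p : Label) : p.cell ≠ 0 := by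
  decide +revert

theorem exists_cell_eq {a : Fin 5} (ha : a ≠ 0) : ∃ p : Label, p.cell = a := by
  decide +revert

theorem eq_of_cell_eq_lineRel {d : Fin 3} {r : Label} (hr : r.cell = lineRel d) : r = line d := by
  decide +revert

theorem eq_or_eq_or_eq_of_cell_eq_four {i j k : Fin 3} (hij : i ≠ j) (hik : i ≠ k) (hjk : j ≠ k)
    {r : Label} (hr : r.cell = 4) : r = point i ∨ r = point j ∨ r = point k := by
  decide +revert

end Label

theorem incidence_eq_of_mem_coords {F : Type} [Field F] {G : Type} [Group G] [DecidableEq G]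
    {x : XG G} (hG : ∀ a : G, a ^ 2 = 1) {p : Label} {i : Fin 3} (hi : i ∈ p.coords) :
    incidence F x p.cell i = incidence F x p.cell p.coord := by
  have hp := p.coord_mem_coords
  cases p with
  | line d =>
    simp only [Label.coords, Finset.mem_compl, Finset.mem_singleton] at hi hp
    exact incidence_lineRel_eq hG hi hp
  | point d => rw [Finset.mem_singleton.1 hi]; rfl

variable (F : Type) [Field F] {G : Type} [Group G] [DecidableEq G] (x : XG G)

/-- The all-one matrix on the block of the cells `R_a(x)` and `R_c(x)`. -/
def cellBlock (a c : Fin 5) : Matrix (XG G) (XG G) F :=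
  vecMulVec (cellVec F x a) (cellVec F x c)

theorem cellBlock_apply (a c : Fin 5) (y z : XG G) :
    cellBlock F x a c y z = if rel a x y ∧ rel c x z then 1 else 0 := by
  rw [cellBlock, vecMulVec_apply, cellVec, cellVec, ite_and, ite_zero_mul_ite_zero, ite_and,
    one_mul]

variable [Fintype G]

/-- The matrix pairing the points of the cells of `p` and `r` whose values at `p` and `r` agree. -/
def matching (p r : Label) : Matrix (XG G) (XG G) F :=
  incidence F x p.cell p.coord * (incidence F x r.cell r.coord)ᵀ

/-- The all-one blocks together with the matchings. -/
def blockFamily : (Fin 5 × Fin 5) ⊕ (Label × Label) → Matrix (XG G) (XG G) F :=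
  Sum.elim (fun q => cellBlock F x q.1 q.2) (fun q => matching F x q.1 q.2)

/-- The span of the all-one blocks and the matchings. -/
def blockSpan : Submodule F (Matrix (XG G) (XG G) F) :=
  Submodule.span F (Set.range (blockFamily F x))

variable {F x}

theorem matching_apply (p r : Label) (y z : XG G) :
    matching F x p r y z =
      if rel p.cell x y ∧ rel r.cell x z ∧ disp x y p.coord = disp x z r.coord then 1 else 0 :=
  incidence_mul_transpose_apply ..

theorem cellBlock_mem_blockSpan (a c : Fin 5) : cellBlock F x a c ∈ blockSpan F x :=
  Submodule.subset_span ⟨.inl (a, c), rfl⟩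

theorem matching_mem_blockSpan (p r : Label) : matching F x p r ∈ blockSpan F x :=
  Submodule.subset_span ⟨.inr (p, r), rfl⟩

theorem cellBlock_mul_cellBlock (a b c d : Fin 5) :
    cellBlock F x a b * cellBlock F x c d =
      (cellVec F x b ⬝ᵥ cellVec F x c) • cellBlock F x a d := by
  rw [cellBlock, cellBlock, vecMulVec_mul_vecMulVec, vecMulVec_smul, cellBlock]

variable (hG : ∀ a : G, a ^ 2 = 1)
include hG

theorem exists_cellVec_vecMul_incidence_eq (a : Fin 5) (p : Label) :
    ∃ κ : F, cellVec F x a ᵥ* incidence F x p.cell p.coord = κ • offOne F G := by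
  obtain rfl | ha := eq_or_ne a p.cell
  · exact cellVec_vecMul_incidence hG p.coord_mem_moved
  · refine ⟨0, ?_⟩
    rw [← incidence_mulVec_one a 0, ← vecMul_transpose, vecMul_vecMul,
      incidence_transpose_mul_incidence_of_ne ha, vecMul_zero, zero_smul]

theorem exists_gram_label_eq (p r : Label) :
    ∃ α β : F, (incidence F x p.cell p.coord)ᵀ * incidence F x r.cell r.coord =
      α • diagonal (offOne F G) + β • vecMulVec (offOne F G) (offOne F G) := by
  obtain h | h := eq_or_ne p.cell r.cell
  · rw [h]
    exact exists_gram_eq hG (h ▸ p.coord_mem_moved) r.coord_mem_moved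
  · exact ⟨0, 0, by simp [incidence_transpose_mul_incidence_of_ne h]⟩

theorem exists_cellBlock_mul_matching_eq (a c : Fin 5) (p r : Label) :
    ∃ κ : F, cellBlock F x a c * matching F x p r = κ • cellBlock F x a r.cell := by
  obtain ⟨κ, hκ⟩ := exists_cellVec_vecMul_incidence_eq (F := F) (x := x) hG c p
  refine ⟨κ, ?_⟩
  rw [cellBlock, matching, vecMulVec_mul, ← vecMul_vecMul, hκ, smul_vecMul, vecMul_transpose,
    incidence_mulVec_offOne r.coord_mem_moved, vecMulVec_smul, cellBlock]

theorem exists_matching_mul_cellBlock_eq (p r : Label) (a c : Fin 5) :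
    ∃ κ : F, matching F x p r * cellBlock F x a c = κ • cellBlock F x p.cell c := by
  obtain ⟨κ, hκ⟩ := exists_cellVec_vecMul_incidence_eq (F := F) (x := x) hG a r
  refine ⟨κ, ?_⟩
  rw [cellBlock, matching, mul_vecMulVec, ← mulVec_mulVec, mulVec_transpose, hκ, mulVec_smul,
    incidence_mulVec_offOne p.coord_mem_moved, smul_vecMulVec, cellBlock]

theorem exists_matching_mul_matching_eq (p r s t : Label) :
    ∃ α β : F, matching F x p r * matching F x s t =
      α • matching F x p t + β • cellBlock F x p.cell t.cell := by
  obtain ⟨α, β, h⟩ := exists_gram_label_eq (F := F) (x := x) hG r s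
  refine ⟨α, β, ?_⟩
  calc matching F x p r * matching F x s t
      = incidence F x p.cell p.coord *
          ((incidence F x r.cell r.coord)ᵀ * incidence F x s.cell s.coord) *
          (incidence F x t.cell t.coord)ᵀ := by simp only [matching, Matrix.mul_assoc]
    _ = _ := by
      rw [h, Matrix.mul_add, Matrix.add_mul, Matrix.mul_smul, Matrix.mul_smul, Matrix.smul_mul,
        Matrix.smul_mul, incidence_mul_diagonal_offOne p.coord_mem_moved, mul_vecMulVec,
        vecMulVec_mul, vecMul_transpose, incidence_mulVec_offOne p.coord_mem_moved,
        incidence_mulVec_offOne t.coord_mem_moved, matching, cellBlock]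

theorem matching_line_mul_matching_line (p r : Label) (d : Fin 3) :
    matching F x p (.line d) * matching F x (.line d) r = matching F x p r := by
  have hd := mem_moved_lineRel.1 (Label.line d).coord_mem_moved
  calc matching F x p (.line d) * matching F x (.line d) r
      = incidence F x p.cell p.coord *
          ((incidence F x (lineRel d) (Label.line d).coord)ᵀ *
            incidence F x (lineRel d) (Label.line d).coord) *
          (incidence F x r.cell r.coord)ᵀ := by simp only [matching, Matrix.mul_assoc, Label.cell]
    _ = _ := by
      rw [gram_lineRel hG hd hd, incidence_mul_diagonal_offOne p.coord_mem_moved, matching]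

theorem blockSpan_mul_self_le : blockSpan F x * blockSpan F x ≤ blockSpan F x := by
  refine (Submodule.span_mul_span ..).trans_le (Submodule.span_le.2 ?_)
  rintro _ ⟨_, ⟨⟨a, b⟩ | ⟨p, r⟩, rfl⟩, _, ⟨⟨c, d⟩ | ⟨s, t⟩, rfl⟩, rfl⟩ <;>
    simp only [blockFamily, Sum.elim_inl, Sum.elim_inr, SetLike.mem_coe]
  · rw [cellBlock_mul_cellBlock]
    exact Submodule.smul_mem _ _ (cellBlock_mem_blockSpan _ _)
  · obtain ⟨κ, h⟩ := exists_cellBlock_mul_matching_eq (F := F) (x := x) hG a b s t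
    rw [h]
    exact Submodule.smul_mem _ _ (cellBlock_mem_blockSpan _ _)
  · obtain ⟨κ, h⟩ := exists_matching_mul_cellBlock_eq (F := F) (x := x) hG p r c d
    rw [h]
    exact Submodule.smul_mem _ _ (cellBlock_mem_blockSpan _ _)
  · obtain ⟨α, β, h⟩ := exists_matching_mul_matching_eq (F := F) (x := x) hG p r s t
    rw [h]
    exact add_mem (Submodule.smul_mem _ _ (matching_mem_blockSpan _ _))
      (Submodule.smul_mem _ _ (cellBlock_mem_blockSpan _ _))

end Labels

section Algebra

variable {F : Type} [Field F] {G : Type} [Group G] [DecidableEq G] {x : XG G}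

theorem dualE_eq_diagonal (a : Fin 5) : DualE F x a = diagonal (cellVec F x a) := by
  ext y z
  simp only [DualE, of_apply, diagonal_apply, cellVec, ite_and]

theorem adj_zero : Adj F (0 : Fin 5) = (1 : Matrix (XG G) (XG G) F) := by
  ext y z
  simp only [Adj, of_apply, rel_zero, one_apply]

theorem dualE_zero : DualE F x 0 = cellBlock F x 0 0 := by
  ext y z
  rw [cellBlock_apply]
  simp only [DualE, of_apply, rel_zero]
  grind

theorem sum_dualE : ∑ a, DualE F x a = 1 := by
  ext y z
  obtain ⟨a, ha⟩ := exists_rel x y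
  rw [Matrix.sum_apply, one_apply]
  refine (Finset.sum_eq_single a (fun b _ hb => if_neg fun h => hb (rel_unique h.2 ha))
    (by simp)).trans ?_
  simp only [ha, and_true]

theorem sum_adj : ∑ b, Adj F b = AllOne F G := by
  ext y z
  obtain ⟨a, ha⟩ := exists_rel y z
  rw [Matrix.sum_apply]
  exact (Finset.sum_eq_single a (fun b _ hb => if_neg fun h => hb (rel_unique h ha))
    (by simp)).trans (if_pos ha)

variable [Fintype G]

theorem dualE_mul_self (a : Fin 5) : DualE F x a * DualE F x a = DualE F x a := by
  rw [dualE_eq_diagonal, diagonal_mul_diagonal]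
  congr 1
  ext y
  simp [cellVec]

theorem dualE_mul_mul_dualE_apply (a c : Fin 5) (M : Matrix (XG G) (XG G) F) (y z : XG G) :
    (DualE F x a * M * DualE F x c) y z = if rel a x y ∧ rel c x z then M y z else 0 := by
  rw [dualE_eq_diagonal, dualE_eq_diagonal, mul_diagonal, diagonal_mul]
  simp only [cellVec, ite_mul, one_mul, zero_mul, mul_ite, mul_one, mul_zero, ite_and]
  split_ifs <;> rfl

theorem dualE_mul_dualE_of_ne {a c : Fin 5} (hac : a ≠ c) : DualE F x a * DualE F x c = 0 := by
  rw [dualE_eq_diagonal, dualE_eq_diagonal, diagonal_mul_diagonal, diagonal_eq_zero]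
  ext y
  by_cases ha : rel a x y
  · simp [cellVec, show ¬ rel c x y from fun hc => hac (rel_unique ha hc)]
  · simp [cellVec, ha]

theorem dualE_mul_allOne_mul_dualE (a c : Fin 5) :
    DualE F x a * AllOne F G * DualE F x c = cellBlock F x a c := by
  ext y z
  rw [dualE_mul_mul_dualE_apply, cellBlock_apply, AllOne, of_apply]

theorem sum_dualE_mul_adj_mul_dualE (a c : Fin 5) :
    ∑ b, DualE F x a * Adj F b * DualE F x c = cellBlock F x a c := by
  rw [← dualE_mul_allOne_mul_dualE, ← sum_adj, Finset.mul_sum, Finset.sum_mul]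

theorem dualE_mul_adj_lineRel_mul_dualE (a c : Fin 5) (i : Fin 3) :
    DualE F x a * Adj F (lineRel i) * DualE F x c =
      incidence F x a i * (incidence F x c i)ᵀ - DualE F x a * DualE F x c := by
  have h : DualE F x a * DualE F x c = DualE F x a * 1 * DualE F x c := by rw [Matrix.mul_one]
  ext y z
  rw [h, Matrix.sub_apply, dualE_mul_mul_dualE_apply, dualE_mul_mul_dualE_apply,
    incidence_mul_transpose_apply]
  simp only [Adj, of_apply, rel_lineRel, disp, div_left_inj, one_apply]
  grind

theorem dualE_lineRel (d : Fin 3) :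
    DualE F x (lineRel d) = matching F x (.line d) (.line d) := by
  have hd : d ∉ moved (lineRel d) := fun h => mem_moved_lineRel.1 h rfl
  ext y z
  rw [matching_apply, DualE, of_apply]
  refine if_congr ⟨?_, ?_⟩ rfl rfl
  · rintro ⟨rfl, h⟩
    exact ⟨h, h, rfl⟩
  · rintro ⟨hy, hz, h⟩
    exact ⟨disp_injective x (mem_moved_lineRel.1 (Label.line d).coord_mem_moved)
      (Prod.ext h ((disp_eq_one_of_rel hy hd).trans (disp_eq_one_of_rel hz hd).symm)), hy⟩

theorem incidence_mul_transpose_of_notMem {a c : Fin 5} {i : Fin 3} (ha : i ∉ moved a)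
    (hc : i ∉ moved c) : incidence F x a i * (incidence F x c i)ᵀ = cellBlock F x a c := by
  ext y z
  rw [incidence_mul_transpose_apply, cellBlock_apply]
  refine if_congr (and_congr_right fun hy => and_iff_left_of_imp fun hz => ?_) rfl rfl
  rw [disp_eq_one_of_rel hy ha, disp_eq_one_of_rel hz hc]

theorem incidence_mul_transpose_eq_zero {a c : Fin 5} {i : Fin 3}
    (hac : ¬ (i ∈ moved a ↔ i ∈ moved c)) : incidence F x a i * (incidence F x c i)ᵀ = 0 := by
  ext y z
  rw [incidence_mul_transpose_apply, if_neg, Matrix.zero_apply]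
  rintro ⟨hy, hz, h⟩
  exact hac ((rel_iff_disp.1 hy i).symm.trans (h ▸ rel_iff_disp.1 hz i))

variable (hG : ∀ a : G, a ^ 2 = 1)
include hG

theorem incidence_mul_transpose_mem_blockSpan (a c : Fin 5) (i : Fin 3) :
    incidence F x a i * (incidence F x c i)ᵀ ∈ blockSpan F x := by
  by_cases hac : i ∈ moved a ↔ i ∈ moved c
  · by_cases ha : i ∈ moved a
    · obtain ⟨p, rfl, hp⟩ := Label.exists_mem_coords ha
      obtain ⟨r, rfl, hr⟩ := Label.exists_mem_coords (hac.1 ha)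
      rw [incidence_eq_of_mem_coords hG hp, incidence_eq_of_mem_coords hG hr]
      exact matching_mem_blockSpan p r
    · rw [incidence_mul_transpose_of_notMem ha (hac.not.1 ha)]
      exact cellBlock_mem_blockSpan a c
  · rw [incidence_mul_transpose_eq_zero hac]
    exact zero_mem _

theorem one_sup_blockSpan_mul_self_le :
    (1 ⊔ blockSpan F x) * (1 ⊔ blockSpan F x) ≤ 1 ⊔ blockSpan F x := by
  simp only [Submodule.sup_mul, Submodule.mul_sup, one_mul, mul_one]
  exact sup_le le_rfl (sup_le le_sup_right ((blockSpan_mul_self_le hG).trans le_sup_right))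

variable (F x) in
/-- The algebra spanned by the identity, the all-one blocks and the matchings. -/
def blockAlgebra : Subalgebra F (Matrix (XG G) (XG G) F) :=
  (1 ⊔ blockSpan F x).toSubalgebra (Submodule.one_le.1 le_sup_left) fun _ _ hM hN =>
    one_sup_blockSpan_mul_self_le hG (Submodule.mul_mem_mul hM hN)

theorem mem_blockAlgebra_of_mem_blockSpan {M : Matrix (XG G) (XG G) F} (hM : M ∈ blockSpan F x) :
    M ∈ blockAlgebra F x hG :=
  Submodule.mem_sup_right hM

theorem dualE_mem_blockAlgebra (a : Fin 5) : DualE F x a ∈ blockAlgebra F x hG := by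
  have of_ne_four (b : Fin 5) (hb : b ≠ 4) : DualE F x b ∈ blockAlgebra F x hG := by
    obtain rfl | ⟨d, rfl⟩ | rfl := eq_zero_or_lineRel_or_four b
    · exact mem_blockAlgebra_of_mem_blockSpan hG (by
        rw [dualE_zero]
        exact cellBlock_mem_blockSpan 0 0)
    · exact mem_blockAlgebra_of_mem_blockSpan hG (by
        rw [dualE_lineRel]
        exact matching_mem_blockSpan _ _)
    · exact absurd rfl hb
  obtain rfl | ha := eq_or_ne a 4
  · have hsum := Finset.add_sum_erase Finset.univ (DualE F x) (Finset.mem_univ 4)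
    rw [eq_sub_of_add_eq hsum, sum_dualE]
    exact sub_mem (one_mem _) (sum_mem fun b hb => of_ne_four b (Finset.ne_of_mem_erase hb))
  · exact of_ne_four a ha

theorem dualE_mul_adj_mul_dualE_mem_blockAlgebra (a b c : Fin 5) :
    DualE F x a * Adj F b * DualE F x c ∈ blockAlgebra F x hG := by
  have hE (a c : Fin 5) : DualE F x a * DualE F x c ∈ blockAlgebra F x hG :=
    mul_mem (dualE_mem_blockAlgebra hG a) (dualE_mem_blockAlgebra hG c)
  have of_ne_four (b : Fin 5) (hb : b ≠ 4) :
      DualE F x a * Adj F b * DualE F x c ∈ blockAlgebra F x hG := by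
    obtain rfl | ⟨i, rfl⟩ | rfl := eq_zero_or_lineRel_or_four b
    · rw [adj_zero, mul_one]
      exact hE a c
    · rw [dualE_mul_adj_lineRel_mul_dualE]
      exact sub_mem (mem_blockAlgebra_of_mem_blockSpan hG
        (incidence_mul_transpose_mem_blockSpan hG a c i)) (hE a c)
    · exact absurd rfl hb
  obtain rfl | hb := eq_or_ne b 4
  · have hsum := Finset.add_sum_erase Finset.univ (fun b => DualE F x a * Adj F b * DualE F x c)
      (Finset.mem_univ 4)
    rw [eq_sub_of_add_eq hsum, sum_dualE_mul_adj_mul_dualE]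
    exact sub_mem (mem_blockAlgebra_of_mem_blockSpan hG (cellBlock_mem_blockSpan a c))
      (sum_mem fun b hb => of_ne_four b (Finset.ne_of_mem_erase hb))
  · exact of_ne_four b hb

theorem terwilligerAlg_le_blockAlgebra : TerwilligerAlg F G x ≤ blockAlgebra F x hG := by
  refine Algebra.adjoin_le ?_
  rintro _ ⟨a, b, c, rfl⟩
  exact dualE_mul_adj_mul_dualE_mem_blockAlgebra hG a b c

end Algebra

section LinearIndependence

variable {F : Type} [Field F] {G : Type} [Group G] [Fintype G] [DecidableEq G] {x : XG G}

variable (F x) in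
/-- The diagonal idempotent of the cell `R_4(x)`, at `none`, together with the all-one blocks and
the matchings. -/
def extendedFamily : Option ((Fin 5 × Fin 5) ⊕ (Label × Label)) → Matrix (XG G) (XG G) F :=
  fun k => k.elim (DualE F x 4) (blockFamily F x)

theorem two_mul_card_insert_image_disp_lt (hcard : 8 < Fintype.card G) (x y : XG G) :
    2 * (insert 1 (Finset.univ.image (disp x y))).card < Fintype.card G := by
  have h1 := Finset.card_insert_le 1 (Finset.univ.image (disp x y))
  have h2 := Finset.card_image_le (s := Finset.univ) (f := disp x y)
  rw [Finset.card_univ, Fintype.card_fin] at h2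
  lia

theorem dualE_four_apply_eq_zero {y z : XG G} {d : Fin 3}
    (h : matching F x (.point d) (.point d) y z = 0) : DualE F x 4 y z = 0 := by
  refine if_neg ?_
  rintro ⟨rfl, hy⟩
  rw [matching_apply, if_pos ⟨hy, hy, rfl⟩] at h
  exact one_ne_zero h

variable (hG : ∀ a : G, a ^ 2 = 1)
include hG

omit [DecidableEq G] in
theorem exists_rel_cell_disp_eq (x : XG G) (p : Label) {A : G} (hA : A ≠ 1) {S : Finset G}
    (h1 : 1 ∈ S) (hS : 2 * S.card < Fintype.card G) :
    ∃ y, rel p.cell x y ∧ disp x y p.coord = A ∧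
      ∀ r : Label, r.cell = p.cell → r ≠ p → disp x y r.coord ∉ S := by
  cases p with
  | line d =>
    have hne : d + 1 ≠ d := mem_moved_lineRel.1 (Label.line d).coord_mem_moved
    obtain ⟨k, hdk, hk⟩ := exists_ne_and_ne d (d + 1)
    obtain ⟨y, hd, hA'⟩ := exists_disp_eq x hne.symm 1 A
    refine ⟨y, (rel_iff_disp_of_ne hG hne.symm hdk hk).2 ?_, hA', fun r hr hrp => ?_⟩
    · simp [Label.cell, mem_moved_lineRel, hd, hA', hA, hA.symm, hne, hdk.symm]
    · exact absurd (Label.eq_of_cell_eq_lineRel hr) hrp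
  | point i =>
    classical
    have hcard : (S ∪ S.image (A * ·)).card < Fintype.card G := by
      have h1 := Finset.card_union_le S (S.image (A * ·))
      have h2 := Finset.card_image_le (s := S) (f := (A * ·))
      lia
    obtain ⟨B, -, hB⟩ := Finset.exists_mem_notMem_of_card_lt_card hcard
    simp only [Finset.mem_union, Finset.mem_image, not_or, not_exists, not_and] at hB
    obtain ⟨j, hji⟩ := exists_ne i
    obtain ⟨k, hik, hjk⟩ := exists_ne_and_ne i j
    obtain ⟨y, hyi, hyj⟩ := exists_disp_eq x hji.symm A B
    have hyk : disp x y k = A * B := by rw [← disp_mul_disp hG x y hji.symm hik hjk, hyi, hyj]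
    have hAB : A * B ∉ S := fun h =>
      hB.2 (A * B) h (by rw [← mul_assoc, mul_self_eq_one hG, one_mul])
    have hB1 : B ≠ 1 := fun h => hB.1 (h ▸ h1)
    have hABne : A ≠ B := fun h => hAB (by rwa [h, mul_self_eq_one hG])
    refine ⟨y, (rel_iff_disp_of_ne hG hji.symm hik hjk).2 ?_, hyi, fun r hr hrp => ?_⟩
    · simp [Label.cell, mem_moved_four, hyi, hyj, hA, hB1, hABne]
    · obtain rfl | rfl | rfl := Label.eq_or_eq_or_eq_of_cell_eq_four hji.symm hik hjk hr
      · exact absurd rfl hrp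
      · exact hyj ▸ hB.1
      · exact hyk ▸ hAB

omit [DecidableEq G] in
theorem exists_rel_disp_notMem (x : XG G) (a : Fin 5) {S : Finset G}
    (h1 : 1 ∈ S) (hS : 2 * S.card < Fintype.card G) :
    ∃ y, rel a x y ∧ ∀ p : Label, p.cell = a → disp x y p.coord ∉ S := by
  obtain rfl | ha := eq_or_ne a 0
  · exact ⟨x, (rel_zero x x).2 rfl, fun p hp => absurd hp p.cell_ne_zero⟩
  obtain ⟨p, rfl⟩ := Label.exists_cell_eq ha
  obtain ⟨A, -, hA⟩ := Finset.exists_mem_notMem_of_card_lt_card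
    (show S.card < Fintype.card G by lia)
  obtain ⟨y, hy, hyA, hyS⟩ := exists_rel_cell_disp_eq hG x p (ne_of_mem_of_not_mem h1 hA).symm h1 hS
  refine ⟨y, hy, fun r hr => ?_⟩
  obtain rfl | hrp := eq_or_ne r p
  · exact hyA ▸ hA
  · exact hyS r hr hrp

variable (hcard : 8 < Fintype.card G)
include hcard

theorem exists_forall_matching_apply_eq_zero (F : Type) [Field F] (x : XG G) (a c : Fin 5) :
    ∃ y z, rel a x y ∧ rel c x z ∧ ∀ p r, matching F x p r y z = 0 := by
  obtain ⟨y, hy, -⟩ := exists_rel_disp_notMem hG x a (Finset.mem_singleton_self 1)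
    (by rw [Finset.card_singleton]; lia)
  obtain ⟨z, hz, hzS⟩ := exists_rel_disp_notMem hG x c
    (Finset.mem_insert_self 1 (Finset.univ.image (disp x y)))
    (two_mul_card_insert_image_disp_lt hcard x y)
  refine ⟨y, z, hy, hz, fun p r => ?_⟩
  rw [matching_apply, if_neg]
  rintro ⟨-, hr, h⟩
  exact hzS r (rel_unique hr hz) (by simp [← h])

theorem exists_forall_matching_apply_eq_ite (F : Type) [Field F] (x : XG G) (p r : Label) :
    ∃ y z, rel p.cell x y ∧ rel r.cell x z ∧
      ∀ p' r', matching F x p' r' y z = if (p', r') = (p, r) then 1 else 0 := by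
  have : Nontrivial G := Fintype.one_lt_card_iff_nontrivial.1 (by lia)
  obtain ⟨A, hA⟩ := exists_ne (1 : G)
  obtain ⟨y, hy, hyA, hyS⟩ := exists_rel_cell_disp_eq hG x p hA (Finset.mem_insert_self 1 {A})
    (by rw [Finset.card_pair hA.symm]; lia)
  obtain ⟨z, hz, hzA, hzS⟩ := exists_rel_cell_disp_eq hG x r hA
    (Finset.mem_insert_self 1 (Finset.univ.image (disp x y)))
    (two_mul_card_insert_image_disp_lt hcard x y)
  refine ⟨y, z, hy, hz, fun p' r' => ?_⟩
  rw [matching_apply]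
  refine if_congr ⟨?_, ?_⟩ rfl rfl
  · rintro ⟨hp', hr', h⟩
    obtain rfl : r' = r := by
      by_contra hne
      exact hzS r' (rel_unique hr' hz) hne (by simp [← h])
    obtain rfl : p' = p := by
      by_contra hne
      exact hyS p' (rel_unique hp' hy) hne (by simp [h, hzA])
    rfl
  · rintro ⟨⟩
    exact ⟨hy, hz, hyA.trans hzA.symm⟩

theorem linearIndependent_extendedFamily : LinearIndependent F (extendedFamily F x) := by
  rw [Fintype.linearIndependent_iff]
  intro g hg
  have hentry {a c : Fin 5} {y z : XG G} (hy : rel a x y) (hz : rel c x z) :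
      g none * DualE F x 4 y z + (g (some (.inl (a, c))) +
        ∑ q : Label × Label, g (some (.inr q)) * matching F x q.1 q.2 y z) = 0 := by
    have hblock (q : Fin 5 × Fin 5) : cellBlock F x q.1 q.2 y z = if q = (a, c) then 1 else 0 := by
      rw [cellBlock_apply]
      refine if_congr ⟨fun h => Prod.ext (rel_unique h.1 hy) (rel_unique h.2 hz), ?_⟩ rfl rfl
      rintro rfl
      exact ⟨hy, hz⟩
    have h := congrFun₂ hg y z
    simpa [Fintype.sum_option, Fintype.sum_sum_type, extendedFamily, blockFamily, hblock,
      Matrix.sum_apply] using h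
  have hJ (q) : g (some (.inl q)) = 0 := by
    obtain ⟨y, z, hy, hz, h⟩ := exists_forall_matching_apply_eq_zero hG hcard F x q.1 q.2
    simpa [h, dualE_four_apply_eq_zero (h (.point 0) (.point 0))] using hentry hy hz
  have hN (q) : g (some (.inr q)) = 0 := by
    obtain ⟨y, z, hy, hz, h⟩ := exists_forall_matching_apply_eq_ite hG hcard F x q.1 q.2
    obtain ⟨d, hd⟩ : ∃ d : Fin 3, (Label.point d, Label.point d) ≠ q := by
      by_contra! hall
      simpa using (hall 0).trans (hall 1).symm
    have hE := dualE_four_apply_eq_zero ((h (.point d) (.point d)).trans (if_neg hd))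
    simpa [h, hE, hJ] using hentry hy hz
  rintro (_ | q | q)
  · obtain ⟨y, hy, -⟩ := exists_rel_disp_notMem hG x 4 (Finset.mem_singleton_self 1)
      (by rw [Finset.card_singleton]; lia)
    simpa [hJ, hN, DualE, hy] using hentry hy hy
  · exact hJ q
  · exact hN q

end LinearIndependence

section Basis

variable {F : Type} [Field F] {G : Type} [Group G] [Fintype G] [DecidableEq G] {x : XG G}

variable (F) in
/-- The multiples of `E₄*` by which `basisFamily` differs from `extendedFamily`: the products
`E₄* A_d E₄*` of `B₁` are a matching minus `E₄*`. -/
def basisShift : Option ((Fin 5 × Fin 5) ⊕ (Label × Label)) → F :=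
  fun k => if ∃ d, k = some (.inr (.point d, .point d)) then -1 else 0

variable (F x) in
/-- The family listing `B₁ ∪ B₂ ∪ B₅ ∪ B₆`. -/
def basisFamily : Option ((Fin 5 × Fin 5) ⊕ (Label × Label)) → Matrix (XG G) (XG G) F :=
  extendedFamily F x + (basisShift F · • extendedFamily F x none)

theorem basisFamily_none : basisFamily F x none = DualE F x 4 := by
  simp [basisFamily, basisShift, extendedFamily]

theorem basisFamily_cellBlock (q : Fin 5 × Fin 5) :
    basisFamily F x (some (.inl q)) = cellBlock F x q.1 q.2 := by
  simp [basisFamily, basisShift, extendedFamily, blockFamily]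

theorem basisFamily_point_point (d : Fin 3) : basisFamily F x (some (.inr (.point d, .point d))) =
    matching F x (.point d) (.point d) - DualE F x 4 := by
  simp [basisFamily, basisShift, extendedFamily, blockFamily, sub_eq_add_neg]

theorem basisFamily_matching {p r : Label} (h : ∀ d, p = .point d → r ≠ .point d) :
    basisFamily F x (some (.inr (p, r))) = matching F x p r := by
  have h' : ¬ ∃ d, p = .point d ∧ r = .point d := fun ⟨d, hp, hr⟩ => h d hp hr
  simp [basisFamily, basisShift, extendedFamily, blockFamily, h']

theorem dualE_mul_adj_lineRel_mul_dualE_four (d : Fin 3) :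
    DualE F x 4 * Adj F (lineRel d) * DualE F x 4 =
      matching F x (.point d) (.point d) - DualE F x 4 := by
  rw [dualE_mul_adj_lineRel_mul_dualE, dualE_mul_self]
  rfl

theorem dualE_mul_adj_zero_mul_dualE (a : Fin 5) :
    DualE F x a * Adj F 0 * DualE F x a = DualE F x a := by
  rw [adj_zero, Matrix.mul_one, dualE_mul_self]

theorem mem_b1set_of_ne_zero {a b c : Fin 5} (ha : a ≠ 0) (hb : b ≠ 4) (hc : c ≠ 0)
    (hmax : b ≠ max a c) (h : DualE F x a * Adj F b * DualE F x c ≠ 0) :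
    DualE F x a * Adj F b * DualE F x c ∈ B1set F G x := by
  obtain ⟨y, z, hyz⟩ : ∃ y z : XG G,
      (DualE F x a * Adj F b * DualE F x c : Matrix (XG G) (XG G) F) y z ≠ 0 := by
    by_contra! h0
    exact h (Matrix.ext h0)
  rw [dualE_mul_mul_dualE_apply, Adj, of_apply] at hyz
  obtain ⟨⟨hy, hz⟩, hyz⟩ : (rel a x y ∧ rel c x z) ∧ rel b y z := by
    simpa only [ne_eq, ite_eq_right_iff, Classical.not_imp, one_ne_zero, not_false_eq_true,
      and_true] using hyz
  refine ⟨a, c, b, ?_, ?_, ?_, hmax, ⟨x, y, hy, z, hz, rel_symm hyz⟩, rfl⟩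
  all_goals
    clear * - ha hb hc
    decide +revert

theorem cell_cases_of_moved_subset {a b c : Fin 5} (ha : a ≠ 0) (hb : b ≠ 4) (hc : c ≠ 0)
    (hmax : b ≠ max a c) (hA : moved a ⊆ moved c ∪ moved b) (hB : moved b ⊆ moved c ∪ moved a)
    (hC : moved c ⊆ moved a ∪ moved b) :
    (b = 0 ∧ a = c) ∨ (∃ d, b = lineRel d ∧ a = 4 ∧ c = 4) ∨
      ∃ (p r : Label) (d : Fin 3),
        p.cell = a ∧ r.cell = c ∧ a ≠ c ∧ b = lineRel d ∧ d ∈ p.coords ∧ d ∈ r.coords := by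
  decide +revert

theorem lineRel_ne_max_cell {p r : Label} {d : Fin 3} (hpr : p.cell ≠ r.cell) (hp : d ∈ p.coords)
    (hr : d ∈ r.coords) : lineRel d ≠ max p.cell r.cell := by
  decide +revert

theorem b2set_eq : B2set F G x = {M | ∃ a b, M = cellBlock F x a b} := by
  simp only [B2set, dualE_mul_allOne_mul_dualE]

variable (hG : ∀ a : G, a ^ 2 = 1)
include hG

theorem dualE_mul_adj_mul_dualE_eq_matching {p r : Label} {d : Fin 3} (hpr : p.cell ≠ r.cell)
    (hp : d ∈ p.coords) (hr : d ∈ r.coords) :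
    DualE F x p.cell * Adj F (lineRel d) * DualE F x r.cell = matching F x p r := by
  rw [dualE_mul_adj_lineRel_mul_dualE, dualE_mul_dualE_of_ne hpr, sub_zero,
    incidence_eq_of_mem_coords hG hp, incidence_eq_of_mem_coords hG hr, matching]

theorem dualE_mul_adj_mul_dualE_mul_adj_mul_dualE_eq_matching {p r : Label} {i j k : Fin 3}
    (hp : i ∈ p.coords) (hpk : p.cell ≠ lineRel k) (hik : i ≠ k)
    (hr : j ∈ r.coords) (hrk : r.cell ≠ lineRel k) (hjk : j ≠ k) :
    DualE F x p.cell * Adj F (lineRel i) * DualE F x (lineRel k) * Adj F (lineRel j) *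
      DualE F x r.cell = matching F x p r := by
  have mem_coords {d : Fin 3} (hdk : d ≠ k) : d ∈ (Label.line k).coords := by
    simpa [Label.coords] using hdk
  calc _ = (DualE F x p.cell * Adj F (lineRel i) * DualE F x (lineRel k)) *
        (DualE F x (lineRel k) * Adj F (lineRel j) * DualE F x r.cell) := by
        nth_rw 1 [← dualE_mul_self (lineRel k)]
        simp only [Matrix.mul_assoc]
    _ = matching F x p (.line k) * matching F x (.line k) r := congrArg₂ _
        (dualE_mul_adj_mul_dualE_eq_matching hG hpk hp (mem_coords hik))
        (dualE_mul_adj_mul_dualE_eq_matching hG (p := .line k) hrk.symm (mem_coords hjk) hr)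
    _ = matching F x p r := matching_line_mul_matching_line hG p r k

theorem b5set_eq : B5set F G x =
    {M | ∃ d, M = matching F x (.line d) (.point d) ∨ M = matching F x (.point d) (.line d)} := by
  have h (p r : Label) (i j k : Fin 3)
      (h : (i ∈ p.coords ∧ p.cell ≠ lineRel k ∧ i ≠ k) ∧
        (j ∈ r.coords ∧ r.cell ≠ lineRel k ∧ j ≠ k)) :=
    dualE_mul_adj_mul_dualE_mul_adj_mul_dualE_eq_matching (F := F) (x := x) hG
      h.1.1 h.1.2.1 h.1.2.2 h.2.1 h.2.2.1 h.2.2.2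
  have hset : B5set F G x =
      {matching F x (.line 0) (.point 0), matching F x (.line 1) (.point 1),
        matching F x (.line 2) (.point 2), matching F x (.point 0) (.line 0),
        matching F x (.point 1) (.line 1), matching F x (.point 2) (.line 2)} := by
    rw [← h (.line 0) (.point 0) 1 0 2 (by decide), ← h (.line 1) (.point 1) 0 1 2 (by decide),
      ← h (.line 2) (.point 2) 0 2 1 (by decide), ← h (.point 0) (.line 0) 0 1 2 (by decide),
      ← h (.point 1) (.line 1) 1 0 2 (by decide), ← h (.point 2) (.line 2) 2 0 1 (by decide)]
    rfl
  ext M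
  simp only [hset, Set.mem_insert_iff, Set.mem_singleton_iff, Set.mem_ofPred_eq,
    Fin.exists_fin_succ, IsEmpty.exists_iff]
  tauto

theorem b6set_eq : B6set F G x =
    {M | ∃ i j, i ≠ j ∧ M = matching F x (.point i) (.point j)} := by
  have hproduct {i j k : Fin 3} (hik : i ≠ k) (hjk : j ≠ k) :=
    dualE_mul_adj_mul_dualE_mul_adj_mul_dualE_eq_matching (F := F) (x := x) hG
      (p := .point i) (r := .point j) (Finset.mem_singleton_self i)
      (lineRel_ne_four k).symm hik (Finset.mem_singleton_self j) (lineRel_ne_four k).symm hjk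
  ext M
  constructor
  · rintro ⟨a, b, c, habc, rfl⟩
    obtain ⟨i, k, j, rfl, rfl, rfl, hik, hjk, hij⟩ : ∃ i k j, a = lineRel i ∧ b = lineRel k ∧
        c = lineRel j ∧ i ≠ k ∧ j ≠ k ∧ i ≠ j := by
      clear * - habc
      decide +revert
    exact ⟨i, j, hij, hproduct hik hjk⟩
  · rintro ⟨i, j, hij, rfl⟩
    obtain ⟨k, hik, hjk⟩ := exists_ne_and_ne i j
    refine ⟨lineRel i, lineRel k, lineRel j, ?_, (hproduct hik hjk).symm⟩
    clear * - hij hik hjk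
    decide +revert

theorem exists_basisFamily_eq_of_mem_b1set {M : Matrix (XG G) (XG G) F} (hM : M ∈ B1set F G x) :
    ∃ k, basisFamily F x k = M := by
  obtain ⟨a, c, b, ha, hc, hb, hmax, ⟨u, v, huv, w, huw, hwv⟩, rfl⟩ := hM
  have ha0 : a ≠ 0 := by rintro rfl; simp at ha
  have hb4 : b ≠ 4 := by rintro rfl; simp at hb
  have hc0 : c ≠ 0 := by rintro rfl; simp at hc
  obtain ⟨rfl, rfl⟩ | ⟨d, rfl, rfl, rfl⟩ | ⟨p, r, d, rfl, rfl, hpr, rfl, hp, hr⟩ :=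
    cell_cases_of_moved_subset ha0 hb4 hc0 hmax (moved_subset_union huw hwv huv)
      (moved_subset_union (rel_symm huw) huv hwv) (moved_subset_union huv (rel_symm hwv) huw)
  · obtain h | ⟨d, rfl⟩ | rfl := eq_zero_or_lineRel_or_four a
    · exact absurd h ha0
    · exact ⟨some (.inr (.line d, .line d)), by
        rw [dualE_mul_adj_zero_mul_dualE, dualE_lineRel, basisFamily_matching (by simp)]⟩
    · exact ⟨none, by rw [dualE_mul_adj_zero_mul_dualE, basisFamily_none]⟩
  · exact ⟨some (.inr (.point d, .point d)), by
      rw [dualE_mul_adj_lineRel_mul_dualE_four, basisFamily_point_point]⟩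
  · refine ⟨some (.inr (p, r)), ?_⟩
    rw [dualE_mul_adj_mul_dualE_eq_matching hG hpr hp hr, basisFamily_matching]
    rintro d rfl rfl
    exact hpr rfl

variable (hcard : 8 < Fintype.card G)
include hcard

theorem linearIndependent_basisFamily : LinearIndependent F (basisFamily F x) := by
  rw [basisFamily, linearIndependent_add_smul_iff (by simp [basisShift])]
  exact linearIndependent_extendedFamily hG hcard

theorem matching_mem_b1set {p r : Label} {d : Fin 3} (hp : d ∈ p.coords) (hr : d ∈ r.coords)
    (hpr : p.cell ≠ r.cell) : matching F x p r ∈ B1set F G x := by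
  have hne := (linearIndependent_extendedFamily (F := F) (x := x) hG hcard).ne_zero
    (some (.inr (p, r)))
  have h := dualE_mul_adj_mul_dualE_eq_matching (F := F) (x := x) hG hpr hp hr
  rw [← h]
  exact mem_b1set_of_ne_zero p.cell_ne_zero (lineRel_ne_four d) r.cell_ne_zero
    (lineRel_ne_max_cell hpr hp hr) (h ▸ hne)

theorem dualE_mem_b1set {a : Fin 5} (ha : a ≠ 0) : DualE F x a ∈ B1set F G x := by
  rw [← dualE_mul_adj_zero_mul_dualE]
  refine mem_b1set_of_ne_zero ha (by decide) ha (by simpa using ha.symm) ?_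
  have hne := (linearIndependent_extendedFamily (F := F) (x := x) hG hcard).ne_zero
  rw [dualE_mul_adj_zero_mul_dualE]
  obtain h | ⟨d, rfl⟩ | rfl := eq_zero_or_lineRel_or_four a
  · exact absurd h ha
  · rw [dualE_lineRel]
    exact hne (some (.inr (.line d, .line d)))
  · exact hne none

theorem matching_sub_dualE_four_mem_b1set (d : Fin 3) :
    matching F x (.point d) (.point d) - DualE F x 4 ∈ B1set F G x := by
  have hne := (linearIndependent_basisFamily (F := F) (x := x) hG hcard).ne_zero
    (some (.inr (.point d, .point d)))
  rw [basisFamily_point_point, ← dualE_mul_adj_lineRel_mul_dualE_four] at hne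
  rw [← dualE_mul_adj_lineRel_mul_dualE_four]
  have hmax : lineRel d ≠ max 4 4 := lineRel_ne_four d
  exact mem_b1set_of_ne_zero (by decide) (lineRel_ne_four d) (by decide) hmax hne

theorem basisFamily_mem (k) : basisFamily F x k ∈
    B1set F G x ∪ B2set F G x ∪ B5set F G x ∪ B6set F G x := by
  rw [b2set_eq, b5set_eq hG, b6set_eq hG]
  obtain _ | q | ⟨⟨i⟩ | ⟨i⟩, ⟨j⟩ | ⟨j⟩⟩ := k
  · rw [basisFamily_none]
    exact .inl (.inl (.inl (dualE_mem_b1set hG hcard (by decide))))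
  · rw [basisFamily_cellBlock]
    exact .inl (.inl (.inr ⟨q.1, q.2, rfl⟩))
  · rw [basisFamily_matching (by simp)]
    refine .inl (.inl (.inl ?_))
    obtain rfl | hij := eq_or_ne i j
    · rw [← dualE_lineRel]
      exact dualE_mem_b1set hG hcard (Label.line i).cell_ne_zero
    · obtain ⟨d, hid, hjd⟩ := exists_ne_and_ne i j
      exact matching_mem_b1set hG hcard (d := d) (by simpa [Label.coords] using hid.symm)
        (by simpa [Label.coords] using hjd.symm) (by simpa [Label.cell, lineRel] using hij)
  · rw [basisFamily_matching (by simp)]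
    obtain rfl | hij := eq_or_ne i j
    · exact .inl (.inr ⟨i, .inl rfl⟩)
    · exact .inl (.inl (.inl (matching_mem_b1set hG hcard (d := j)
        (by simpa [Label.coords] using hij.symm) (by simp [Label.coords]) (lineRel_ne_four i))))
  · rw [basisFamily_matching (by simp)]
    obtain rfl | hij := eq_or_ne i j
    · exact .inl (.inr ⟨i, .inr rfl⟩)
    · exact .inl (.inl (.inl (matching_mem_b1set hG hcard (d := i)
        (by simp [Label.coords]) (by simpa [Label.coords] using hij) (lineRel_ne_four j).symm)))
  · obtain rfl | hij := eq_or_ne i j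
    · rw [basisFamily_point_point]
      exact .inl (.inl (.inl (matching_sub_dualE_four_mem_b1set hG hcard i)))
    · rw [basisFamily_matching (by simpa using hij.symm)]
      exact .inr ⟨i, j, hij, rfl⟩

theorem range_basisFamily : Set.range (basisFamily F x) =
    B1set F G x ∪ B2set F G x ∪ B5set F G x ∪ B6set F G x := by
  refine Set.Subset.antisymm (Set.range_subset_iff.2 (basisFamily_mem hG hcard)) ?_
  rw [b2set_eq, b5set_eq hG, b6set_eq hG]
  rintro M (((hM | ⟨a, b, rfl⟩) | ⟨d, rfl | rfl⟩) | ⟨i, j, hij, rfl⟩)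
  · exact exists_basisFamily_eq_of_mem_b1set hG hM
  · exact ⟨some (.inl (a, b)), basisFamily_cellBlock _⟩
  · exact ⟨some (.inr (.line d, .point d)), basisFamily_matching (by simp)⟩
  · exact ⟨some (.inr (.point d, .line d)), basisFamily_matching (by simp)⟩
  · exact ⟨some (.inr (.point i, .point j)), basisFamily_matching (by simpa using hij.symm)⟩

end Basis

section Span

variable {F : Type} [Field F] {G : Type} [Group G] [Fintype G] [DecidableEq G] {x : XG G}

theorem extendedFamily_mem_span (k) :
    extendedFamily F x k ∈ Submodule.span F (Set.range (basisFamily F x)) := by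
  have mem k : basisFamily F x k ∈ Submodule.span F (Set.range (basisFamily F x)) :=
    Submodule.subset_span ⟨k, rfl⟩
  have hnone : extendedFamily F x none = basisFamily F x none := basisFamily_none.symm
  have hk : extendedFamily F x k = basisFamily F x k - basisShift F k • basisFamily F x none := by
    rw [← hnone]
    exact eq_sub_of_add_eq rfl
  rw [hk]
  exact sub_mem (mem k) (Submodule.smul_mem _ _ (mem none))

theorem blockAlgebra_le_span (hG : ∀ a : G, a ^ 2 = 1) :
    Subalgebra.toSubmodule (blockAlgebra F x hG) ≤
      Submodule.span F (Set.range (basisFamily F x)) := by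
  refine sup_le (Submodule.one_le.2 ?_) (Submodule.span_le.2 ?_)
  · rw [← sum_dualE (x := x)]
    refine sum_mem fun a _ => ?_
    obtain rfl | ⟨d, rfl⟩ | rfl := eq_zero_or_lineRel_or_four a
    · rw [dualE_zero]
      exact extendedFamily_mem_span (some (.inl (0, 0)))
    · rw [dualE_lineRel]
      exact extendedFamily_mem_span (some (.inr (.line d, .line d)))
    · exact extendedFamily_mem_span none
  · rintro _ ⟨k, rfl⟩
    exact extendedFamily_mem_span (some k)

theorem dualE_mul_adj_mul_dualE_mem_terwilligerAlg (a b c : Fin 5) :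
    DualE F x a * Adj F b * DualE F x c ∈ TerwilligerAlg F G x :=
  Algebra.subset_adjoin ⟨a, b, c, rfl⟩

theorem dualE_mem_terwilligerAlg (a : Fin 5) : DualE F x a ∈ TerwilligerAlg F G x :=
  dualE_mul_adj_zero_mul_dualE (F := F) (x := x) a ▸
    dualE_mul_adj_mul_dualE_mem_terwilligerAlg a 0 a

theorem adj_mem_terwilligerAlg (b : Fin 5) : Adj F b ∈ TerwilligerAlg F G x := by
  have h : ∑ a, ∑ c, DualE F x a * Adj F b * DualE F x c = Adj F b := by
    simp only [← Finset.mul_sum, ← Finset.sum_mul, sum_dualE, one_mul, mul_one]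
  rw [← h]
  exact sum_mem fun a _ => sum_mem fun c _ => dualE_mul_adj_mul_dualE_mem_terwilligerAlg a b c

theorem union_subset_terwilligerAlg :
    B1set F G x ∪ B2set F G x ∪ B5set F G x ∪ B6set F G x ⊆ TerwilligerAlg F G x := by
  have hE a := dualE_mem_terwilligerAlg (F := F) (x := x) a
  have hA b := adj_mem_terwilligerAlg (F := F) (x := x) b
  have hJ : AllOne F G ∈ TerwilligerAlg F G x := sum_adj (F := F) (G := G) ▸ sum_mem fun b _ => hA b
  have hfive a b c d e :
      DualE F x a * Adj F b * DualE F x c * Adj F d * DualE F x e ∈ TerwilligerAlg F G x :=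
    mul_mem (mul_mem (mul_mem (mul_mem (hE a) (hA b)) (hE c)) (hA d)) (hE e)
  rintro _ (((⟨a, c, b, -, -, -, -, -, rfl⟩ | ⟨a, b, rfl⟩) | h) | ⟨a, b, c, -, rfl⟩)
  · exact mul_mem (mul_mem (hE a) (hA b)) (hE c)
  · exact mul_mem (mul_mem (hE a) hJ) (hE b)
  · obtain rfl | rfl | rfl | rfl | rfl | rfl := h <;> apply hfive
  · exact hfive 4 a b c 4

end Span

theorem stmt14 (F : Type) [Field F] (G : Type) [Group G] [Fintype G] [DecidableEq G]
    (helem : ∀ a : G, a ^ 2 = 1) (hcard : 8 < Fintype.card G)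
    (x : XG G) :
    LinearIndependent F
      ((↑) : ↥(B1set F G x ∪ B2set F G x ∪ B5set F G x ∪ B6set F G x) →
        Matrix (XG G) (XG G) F) ∧
    Submodule.span F (B1set F G x ∪ B2set F G x ∪ B5set F G x ∪ B6set F G x) =
      Subalgebra.toSubmodule (TerwilligerAlg F G x) := by
  have hrange := range_basisFamily (F := F) (x := x) helem hcard
  refine ⟨(linearIndependent_basisFamily helem hcard).linearIndepOn_id' hrange, le_antisymm ?_ ?_⟩
  · exact Submodule.span_le.2 union_subset_terwilligerAlg
  · rw [← hrange]
    exact fun M hM => blockAlgebra_le_span helem (terwilligerAlg_le_blockAlgebra helem hM)
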